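/- Let x be a rational number and let k(x) be the least natural number t such that T^[t](x) is an integer. Then for every index i with 1 ≤ i ≤ k(x), the c-series term c_i := c(T^[i](x)) satisfies |c_i| ≥ 2; in particular no term of the c-series after the initial one equals −1, 0, or 1. -/

import Mathlib

/-- The even-rounded floor `c(x)`: equal to `x` if `x` is an integer; otherwise
`⌊x⌋` if `⌊x⌋` is even and `⌊x⌋ + 1` if `⌊x⌋` is odd. -/
noncomputable def evenFloor (x : ℚ) : ℤ :=
  if x.den = 1 then x.num
  else if Even ⌊x⌋ then ⌊x⌋ else ⌊x⌋ + 1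

/-- The step map of the even continued fraction (c-series) expansion:
`T x = (x - c x)⁻¹` if `x` is not an integer, and `T x = 0` otherwise. -/
noncomputable def stepMap (x : ℚ) : ℚ :=
  if x.den = 1 then 0 else (x - evenFloor x)⁻¹

/-!
The integer `c x` is even unless `x` is an integer, and always lies at distance less than `1`
from `x`. Hence `1 < |T x|` as long as `x` is not an integer. On the other hand, `1 < |z|` forces
`c z ≠ 0`, so either `c z` is even and nonzero, or `z = c z` is an integer with `1 < |z|`; in both
cases `2 ≤ |c z|`.
-/

section EvenFloor

variable {x : ℚ}

theorem intCast_ne_of_den_ne_one (hx : x.den ≠ 1) (n : ℤ) : (n : ℚ) ≠ x :=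
  fun h ↦ hx (h ▸ Rat.den_intCast n)

theorem evenFloor_eq_self (hx : x.den = 1) : (evenFloor x : ℚ) = x := by
  rw [evenFloor, if_pos hx]
  exact (Rat.den_eq_one_iff x).1 hx

theorem even_evenFloor (hx : x.den ≠ 1) : Even (evenFloor x) := by
  rw [evenFloor, if_neg hx]
  split_ifs with hfloor
  · exact hfloor
  · exact (Int.not_even_iff_odd.1 hfloor).add_one

theorem abs_sub_evenFloor_lt_one (x : ℚ) : |x - evenFloor x| < 1 := by
  by_cases hx : x.den = 1
  · simp [evenFloor_eq_self hx]
  · have floor_lt : (⌊x⌋ : ℚ) < x :=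
      (Int.floor_le x).lt_of_ne (intCast_ne_of_den_ne_one hx ⌊x⌋)
    have lt_floor_add_one : x < ⌊x⌋ + 1 := Int.lt_floor_add_one x
    rw [evenFloor, if_neg hx, abs_lt]
    split_ifs <;> push_cast <;> constructor <;> linarith

theorem evenFloor_ne_zero (hx : 1 ≤ |x|) : evenFloor x ≠ 0 := by
  intro h
  have abs_lt_one : |x| < 1 := by simpa [h] using abs_sub_evenFloor_lt_one x
  exact abs_lt_one.not_ge hx

theorem two_le_abs_evenFloor (hx : 1 < |x|) : 2 ≤ |evenFloor x| := by
  by_cases hden : x.den = 1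
  · rw [← evenFloor_eq_self hden] at hx
    exact_mod_cast hx
  · have two_dvd : 2 ∣ |evenFloor x| := (dvd_abs _ _).2 (even_evenFloor hden).two_dvd
    exact Int.le_of_dvd (abs_pos.2 (evenFloor_ne_zero hx.le)) two_dvd

theorem one_lt_abs_stepMap (hx : x.den ≠ 1) : 1 < |stepMap x| := by
  have abs_sub_pos : 0 < |x - evenFloor x| :=
    abs_pos.2 (sub_ne_zero.2 (intCast_ne_of_den_ne_one hx (evenFloor x)).symm)
  rw [stepMap, if_neg hx, abs_inv]
  exact (one_lt_inv₀ abs_sub_pos).2 (abs_sub_evenFloor_lt_one x)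

end EvenFloor

/-- With `k x` the least `t` such that `T^[t] x` is an integer, every c-series
term `cᵢ = c (T^[i] x)` with `1 ≤ i ≤ k x` satisfies `|cᵢ| ≥ 2`; in particular
no term after the initial one equals `-1`, `0` or `1`. -/
theorem evenFloor_iterate_abs_ge_two (x : ℚ)
    (k : ℕ) (hk : k = sInf {t : ℕ | (stepMap^[t] x).den = 1}) :
    ∀ i : ℕ, 1 ≤ i → i ≤ k →
      2 ≤ |evenFloor (stepMap^[i] x)| ∧ evenFloor (stepMap^[i] x) ≠ -1 ∧
        evenFloor (stepMap^[i] x) ≠ 0 ∧ evenFloor (stepMap^[i] x) ≠ 1 := by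
  intro i one_le_i i_le_k
  obtain ⟨j, rfl⟩ := Nat.exists_eq_add_of_le' one_le_i
  have j_lt_sInf : j < sInf {t : ℕ | (stepMap^[t] x).den = 1} := hk ▸ i_le_k
  have den_ne_one : (stepMap^[j] x).den ≠ 1 := fun h ↦ Nat.notMem_of_lt_sInf j_lt_sInf h
  have two_le_abs : 2 ≤ |evenFloor (stepMap^[j + 1] x)| := by
    rw [Function.iterate_succ_apply']
    exact two_le_abs_evenFloor (one_lt_abs_stepMap den_ne_one)
  refine ⟨two_le_abs, ?_, ?_, ?_⟩ <;> intro h <;> rw [h] at two_le_abs <;> norm_num at two_le_abs
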